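/- Let n = qk with k ≥ 3 and q ≥ 1, and let F ⊆ C([n],k) be a non-trivial union-q-efficient family. Then |F| ≤ C(n−q, k) + q, and equality holds only for the family consisting of q pairwise disjoint k-sets each containing one of q designated elements, together with all k-subsets of the remaining n−q elements. -/

import Mathlib

/-!
Extract from `F` itself a perfect matching `M ⊆ F`, and let `A` be one of the other members of `F`.
Starting from `W = A`, one can add points to `W` until `#W = k + q` while `A` stays the only member
of `F \ M` contained in `W`. Indeed, if no point can be added, the sets of `F \ M` with at most one
point outside `W`, together with the blocks of `M` meeting `W \ A`, cover everything but do not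
include all of `M`; a perfect matching extracted from this cover then meets `W` in too many points,
up to a boundary case for `k = 3` excluded by a second extraction.

The pairs `(A, Wᶜ)` form a cross-intersecting set-pair system, so Bollobás's theorem bounds
`#(F \ M)` by `C(n - q, k)`. If equality holds, every numbering of the ground set separates exactly
one pair; transposing two neighbours of a numbering then shows that the sets `A` are closed under
exchanging a point of `A` with a point of its partner, so they are all the `k`-subsets of a set `U`.
The blocks of `M` are not contained in `U`, hence each of them contains exactly one point of `Uᶜ`.
-/

open Finset

section SetPairs

variable {α ι : Type*}

/-- A cross-intersecting set-pair system, the object of Bollobás's theorem: `A i` is disjoint from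
its own partner `C i` and meets every other `C j`. -/
def IsCrossIntersecting (A C : ι → Finset α) : Prop :=
  ∀ i j, Disjoint (A i) (C j) ↔ i = j

namespace IsCrossIntersecting

variable {A C : ι → Finset α}

lemma disjoint (h : IsCrossIntersecting A C) (i : ι) : Disjoint (A i) (C i) := (h i i).2 rfl

lemma injective_left (h : IsCrossIntersecting A C) : Function.Injective A :=
  fun i j hij ↦ (h i j).1 (hij ▸ h.disjoint j)

end IsCrossIntersecting

lemma sum_inv_choose_of_card_eq [Fintype ι] {A C : ι → Finset α} {k l : ℕ}
    (hA : ∀ i, #(A i) = k) (hC : ∀ i, #(C i) = l) :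
    ∑ i, ((#(A i) + #(C i)).choose #(A i) : ℚ≥0)⁻¹ =
      (Fintype.card ι : ℚ≥0) / ((k + l).choose k : ℕ) := by
  simp [hA, hC, div_eq_mul_inv]

lemma eq_powersetCard_of_exchange [DecidableEq α] {𝒜 : Finset (Finset α)} {U : Finset α} {k : ℕ}
    (hne : 𝒜.Nonempty) (hsub : 𝒜 ⊆ U.powersetCard k)
    (hex : ∀ A ∈ 𝒜, ∀ a ∈ A, ∀ c ∈ U \ A, insert c (A.erase a) ∈ 𝒜) :
    𝒜 = U.powersetCard k := by
  refine hsub.antisymm fun X hX ↦ ?_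
  obtain ⟨hXU, hXk⟩ := mem_powersetCard.1 hX
  obtain ⟨A, hA, hmin⟩ := exists_min_image 𝒜 (fun A ↦ #(X \ A)) hne
  have hAk : #A = k := (mem_powersetCard.1 (hsub hA)).2
  suffices hXA : X ⊆ A by rwa [eq_of_subset_of_card_le hXA (by rw [hXk, hAk])]
  by_contra hXA
  obtain ⟨c, hcX, hcA⟩ := not_subset.1 hXA
  obtain ⟨a, haA, haX⟩ : ∃ a ∈ A, a ∉ X :=
    not_subset.1 fun hAX ↦ hXA (eq_of_subset_of_card_le hAX (by rw [hXk, hAk])).superset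
  refine (hmin _ (hex A hA a haA c (mem_sdiff.2 ⟨hXU hcX, hcA⟩))).not_gt (card_lt_card ?_)
  refine (ssubset_iff_of_subset fun x hx ↦ ?_).2 ⟨c, by simp [hcX, hcA], by simp⟩
  grind

lemma exists_perm_mapsTo_mapsTo [Finite α] {A C A' C' : Finset α} (hA : #A = #A')
    (hC : #C = #C') (h : Disjoint A C) (h' : Disjoint A' C') :
    ∃ τ : Equiv.Perm α, (∀ a ∈ A, τ a ∈ A') ∧ ∀ c ∈ C, τ c ∈ C' := by
  classical
  let e : {x // x ∈ A ∪ C} ≃ {x // x ∈ A' ∪ C'} :=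
    ((Equiv.Finset.union A C h).symm.trans
      (Equiv.sumCongr (equivOfCardEq hA) (equivOfCardEq hC))).trans (Equiv.Finset.union A' C' h')
  refine ⟨e.extendSubtype, fun a ha ↦ ?_, fun c hc ↦ ?_⟩
  · have : (Equiv.Finset.union A C h).symm ⟨a, mem_union_left _ ha⟩ = Sum.inl ⟨a, ha⟩ := by
      rw [Equiv.symm_apply_eq]; rfl
    simp [e.extendSubtype_apply_of_mem a (mem_union_left _ ha), e, this]
  · have : (Equiv.Finset.union A C h).symm ⟨c, mem_union_right _ hc⟩ = Sum.inr ⟨c, hc⟩ := by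
      rw [Equiv.symm_apply_eq]; rfl
    simp [e.extendSubtype_apply_of_mem c (mem_union_right _ hc), e, this]

variable [Fintype α]

lemma exists_numbering_lt_of_lt (r : α → ℕ) :
    ∃ f : Numbering α, ∀ x y, r x < r y → f x < f y := by
  let e := Fintype.equivFin α
  refine ⟨e.trans (Tuple.sort (r ∘ e.symm)).symm, fun x y hxy ↦ ?_⟩
  by_contra! hle
  have := Tuple.monotone_sort (r ∘ e.symm) hle
  simp only [Equiv.trans_apply, Function.comp_apply, Equiv.apply_symm_apply,
    Equiv.symm_apply_apply] at this
  exact this.not_gt hxy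

lemma exists_numbering_forall_le {T : Finset α} {a c : α} (hc : c ∈ T) (ha : a ∉ T) :
    ∃ f : Numbering α, f c < f a ∧ (∀ x ∈ T, f x ≤ f c) ∧ ∀ y ∉ T, f a ≤ f y := by
  classical
  obtain ⟨f, hf⟩ := exists_numbering_lt_of_lt fun x ↦
    if x ∈ T then (if x = c then 1 else 0) else if x = a then 2 else 3
  refine ⟨f, hf c a (by simp [hc, ha]), fun x hx ↦ ?_, fun y hy ↦ ?_⟩
  · obtain rfl | hxc := eq_or_ne x c
    · rfl
    · exact (hf x c (by simp [hx, hc, hxc])).le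
  · obtain rfl | hya := eq_or_ne y a
    · rfl
    · exact (hf a y (by simp [ha, hy, hya])).le

variable [DecidableEq α]

/-- The numberings of `α` in which all elements of `A` come before all elements of `C`. They are
the tool for counting in the proof of Bollobás's theorem. -/
def separators (A C : Finset α) : Finset (Numbering α) :=
  {f | ∀ a ∈ A, ∀ c ∈ C, f a < f c}

lemma mem_separators {A C : Finset α} {f : Numbering α} :
    f ∈ separators A C ↔ ∀ a ∈ A, ∀ c ∈ C, f a < f c := by
  simp [separators]

lemma disjoint_or_disjoint_of_mem_separators {A C A' C' : Finset α} {f : Numbering α}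
    (h : f ∈ separators A C) (h' : f ∈ separators A' C') : Disjoint A C' ∨ Disjoint A' C := by
  simp only [mem_separators, disjoint_left] at *
  by_contra! ⟨⟨x, hxA, hxC'⟩, y, hyA', hyC⟩
  exact lt_asymm (h x hxA y hyC) (h' y hyA' x hxC')

lemma card_separators_le_of_card_eq {A C A' C' : Finset α} (hA : #A = #A') (hC : #C = #C')
    (h : Disjoint A C) (h' : Disjoint A' C') : #(separators A' C') ≤ #(separators A C) := by
  obtain ⟨τ, hτA, hτC⟩ := exists_perm_mapsTo_mapsTo hA hC h h'
  refine card_le_card_of_injOn τ.trans (fun f hf ↦ ?_) fun f _ g _ hfg ↦ ?_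
  · have hf := mem_separators.1 hf
    exact mem_separators.2 fun a ha c hc ↦ hf _ (hτA a ha) _ (hτC c hc)
  · exact Equiv.ext fun x ↦ by simpa using DFunLike.congr_fun hfg (τ.symm x)

lemma card_separators_eq_of_card_eq {A C A' C' : Finset α} (hA : #A = #A') (hC : #C = #C')
    (h : Disjoint A C) (h' : Disjoint A' C') : #(separators A C) = #(separators A' C') :=
  (card_separators_le_of_card_eq hA.symm hC.symm h' h).antisymm
    (card_separators_le_of_card_eq hA hC h h')

lemma exists_mem_separators_sdiff (f : Numbering α) (U : Finset α) {k : ℕ} (hk : k ≤ #U) :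
    ∃ A ∈ U.powersetCard k, f ∈ separators A (U \ A) := by
  induction k with
  | zero => exact ⟨∅, by simp, by simp [mem_separators]⟩
  | succ k ih =>
    obtain ⟨A, hA, hf⟩ := ih (by omega)
    rw [mem_powersetCard] at hA
    rw [mem_separators] at hf
    have hne : (U \ A).Nonempty := by
      rw [← card_pos, card_sdiff_of_subset hA.1]; omega
    obtain ⟨m, hm, hmin⟩ := exists_min_image (U \ A) f hne
    rw [mem_sdiff] at hm
    refine ⟨insert m A, ?_, mem_separators.2 fun a ha c hc ↦ ?_⟩
    · rw [mem_powersetCard, card_insert_of_notMem hm.2, hA.2]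
      exact ⟨insert_subset hm.1 hA.1, rfl⟩
    · simp only [mem_sdiff, mem_insert, not_or] at hc
      have hcUA : c ∈ U \ A := mem_sdiff.2 ⟨hc.1, hc.2.2⟩
      obtain rfl | ha := mem_insert.1 ha
      · exact (hmin c hcUA).lt_of_ne fun h ↦ hc.2.1 (f.injective h).symm
      · exact hf a ha c hcUA

lemma pairwiseDisjoint_separators_sdiff (U : Finset α) (k : ℕ) :
    (U.powersetCard k : Set (Finset α)).PairwiseDisjoint fun X ↦ separators X (U \ X) := by
  intro X hX Y hY hne
  obtain ⟨hXU, hXk⟩ := mem_powersetCard.1 hX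
  obtain ⟨hYU, hYk⟩ := mem_powersetCard.1 hY
  have hsub {S T : Finset α} (hS : S ⊆ U) (h : Disjoint S (U \ T)) : S ⊆ T := fun x hx ↦ by
    by_contra hxT
    exact disjoint_left.1 h hx (mem_sdiff.2 ⟨hS hx, hxT⟩)
  refine disjoint_left.2 fun f hfX hfY ↦ hne ?_
  obtain h | h := disjoint_or_disjoint_of_mem_separators hfX hfY
  · exact eq_of_subset_of_card_le (hsub hXU h) (by rw [hXk, hYk])
  · exact (eq_of_subset_of_card_le (hsub hYU h) (by rw [hXk, hYk])).symm

lemma choose_mul_card_separators {A C : Finset α} (h : Disjoint A C) :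
    (#A + #C).choose #A * #(separators A C) = Fintype.card (Numbering α) := by
  have hU : #(A ∪ C) = #A + #C := card_union_of_disjoint h
  have hcover : ((A ∪ C).powersetCard #A).biUnion (fun X ↦ separators X ((A ∪ C) \ X)) = univ :=
    eq_univ_iff_forall.2 fun f ↦ mem_biUnion.2 (exists_mem_separators_sdiff f _ (by omega))
  have hcard : ∀ X ∈ (A ∪ C).powersetCard #A,
      #(separators X ((A ∪ C) \ X)) = #(separators A C) := fun X hX ↦ by
    obtain ⟨hXU, hXA⟩ := mem_powersetCard.1 hX
    refine card_separators_eq_of_card_eq hXA ?_ disjoint_sdiff h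
    rw [card_sdiff_of_subset hXU, hU, hXA, Nat.add_sub_cancel_left]
  rw [← card_univ, ← hcover, card_biUnion (pairwiseDisjoint_separators_sdiff _ _),
    sum_const_nat hcard, card_powersetCard, hU]

lemma dens_separators {A C : Finset α} (h : Disjoint A C) :
    (separators A C).dens = ((#A + #C).choose #A : ℚ≥0)⁻¹ := by
  have hchoose : ((#A + #C).choose #A : ℚ≥0) ≠ 0 :=
    Nat.cast_ne_zero.2 (Nat.choose_pos (Nat.le_add_right _ _)).ne'
  have : Nonempty (Numbering α) := ⟨Fintype.equivFin α⟩
  have hcard : (Fintype.card (Numbering α) : ℚ≥0) ≠ 0 := Nat.cast_ne_zero.2 Fintype.card_ne_zero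
  rw [dens_eq_card_div_card, div_eq_iff hcard, ← choose_mul_card_separators h, Nat.cast_mul,
    inv_mul_cancel_left₀ hchoose]

namespace IsCrossIntersecting

variable {A C : ι → Finset α}

lemma eq_of_mem_separators (h : IsCrossIntersecting A C) {f : Numbering α} {i j : ι}
    (hi : f ∈ separators (A i) (C i)) (hj : f ∈ separators (A j) (C j)) : i = j :=
  (disjoint_or_disjoint_of_mem_separators hi hj).elim (h i j).1 fun hji ↦ ((h j i).1 hji).symm

section Fintype
variable [Fintype ι]

lemma sum_inv_choose_eq_dens (h : IsCrossIntersecting A C) :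
    ∑ i, ((#(A i) + #(C i)).choose #(A i) : ℚ≥0)⁻¹ =
      (univ.biUnion fun i ↦ separators (A i) (C i)).dens := by
  have hdisj : ((univ : Finset ι) : Set ι).PairwiseDisjoint fun i ↦ separators (A i) (C i) :=
    fun i _ j _ hij ↦ disjoint_left.2 fun f hi hj ↦ hij (h.eq_of_mem_separators hi hj)
  rw [dens_eq_card_div_card, card_biUnion hdisj, Nat.cast_sum, sum_div]
  exact sum_congr rfl fun i _ ↦ by rw [← dens_separators (h.disjoint i), dens_eq_card_div_card]

omit [Fintype α] [DecidableEq α] in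
theorem sum_inv_choose_le_one [Finite α] (h : IsCrossIntersecting A C) :
    ∑ i, ((#(A i) + #(C i)).choose #(A i) : ℚ≥0)⁻¹ ≤ 1 := by
  classical
  cases nonempty_fintype α
  exact h.sum_inv_choose_eq_dens.trans_le dens_le_one

lemma exists_mem_separators_of_sum_eq_one (h : IsCrossIntersecting A C)
    (hsum : ∑ i, ((#(A i) + #(C i)).choose #(A i) : ℚ≥0)⁻¹ = 1) (f : Numbering α) :
    ∃ i, f ∈ separators (A i) (C i) := by
  have : Nonempty (Numbering α) := ⟨f⟩
  rw [h.sum_inv_choose_eq_dens, dens_eq_one] at hsum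
  simpa [← hsum] using mem_univ f

variable {k l : ℕ}

omit [Fintype α] [DecidableEq α] in
theorem card_le_choose [Finite α] (h : IsCrossIntersecting A C) (hA : ∀ i, #(A i) = k)
    (hC : ∀ i, #(C i) = l) : Fintype.card ι ≤ (k + l).choose k := by
  have hpos : (0 : ℚ≥0) < ((k + l).choose k : ℕ) :=
    Nat.cast_pos.2 (Nat.choose_pos (Nat.le_add_right k l))
  have hle := h.sum_inv_choose_le_one
  rwa [sum_inv_choose_of_card_eq hA hC, div_le_one hpos, Nat.cast_le] at hle

lemma exists_mem_separators_of_card_eq_choose (h : IsCrossIntersecting A C)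
    (hA : ∀ i, #(A i) = k) (hC : ∀ i, #(C i) = l) (hcard : Fintype.card ι = (k + l).choose k)
    (f : Numbering α) : ∃ i, f ∈ separators (A i) (C i) := by
  refine h.exists_mem_separators_of_sum_eq_one ?_ f
  rw [sum_inv_choose_of_card_eq hA hC, hcard]
  exact div_self (Nat.cast_ne_zero.2 (Nat.choose_pos (Nat.le_add_right k l)).ne')

end Fintype

end IsCrossIntersecting

-- Transposing two neighbours of a numbering reverses no other pair.
lemma eq_and_eq_of_swap_reverses {f : Numbering α} {T : Finset α} {a c : α}
    (hca : f c < f a) (hT : ∀ x ∈ T, f x ≤ f c) (hT' : ∀ y ∉ T, f a ≤ f y) {u v : α}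
    (huv : f u < f v) (hswap : f (Equiv.swap a c v) ≤ f (Equiv.swap a c u)) :
    u = c ∧ v = a := by
  have hbetween (x : α) : f x ≤ f c ∨ f a ≤ f x :=
    (em (x ∈ T)).imp (hT x) (hT' x)
  have hu := hbetween u
  have hv := hbetween v
  have hinj := f.injective
  simp only [Equiv.swap_apply_def] at hswap
  grind [Function.Injective]

namespace IsCrossIntersecting

variable {A C : ι → Finset α}

lemma exists_subset_insert_erase (h : IsCrossIntersecting A C)
    (hsep : ∀ f : Numbering α, ∃ i, f ∈ separators (A i) (C i)) {i : ι} {a c : α}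
    (ha : a ∈ A i) (hc : c ∈ C i) {S : Finset α} (hAS : A i ⊆ S) (hSC : Disjoint S (C i)) :
    ∃ j, A j ⊆ insert c (S.erase a) ∧ Disjoint (insert c (S.erase a)) (C j) := by
  have hcS : c ∉ S := disjoint_right.1 hSC hc
  have hac : a ≠ c := fun hac ↦ hcS (hac ▸ hAS ha)
  obtain ⟨f, hca, hT, hT'⟩ := exists_numbering_forall_le (T := insert c (S.erase a))
    (mem_insert_self c _) (by simp [hac] : a ∉ insert c (S.erase a))
  obtain ⟨j, hj⟩ := hsep f
  have hji : j ≠ i := by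
    rintro rfl
    exact hca.asymm (mem_separators.1 hj a ha c hc)
  have hswap : (Equiv.swap a c).trans f ∈ separators (A i) (C i) := by
    refine mem_separators.2 fun x hx y hy ↦ ?_
    have hxT : Equiv.swap a c x ∈ insert c (S.erase a) := by
      have := hAS hx
      grind
    have hyT : Equiv.swap a c y ∉ insert c (S.erase a) := by
      have := disjoint_right.1 hSC hy
      grind
    exact (hT _ hxT).trans_lt (hca.trans_le (hT' _ hyT))
  have hj' : (Equiv.swap a c).trans f ∉ separators (A j) (C j) :=
    fun hj' ↦ hji (h.eq_of_mem_separators hj' hswap)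
  rw [mem_separators] at hj hj'
  push Not at hj'
  obtain ⟨u, hu, v, hv, huv⟩ := hj'
  obtain ⟨rfl, rfl⟩ := eq_and_eq_of_swap_reverses hca hT hT' (hj u hu v hv) huv
  refine ⟨j, fun x hx ↦ ?_, disjoint_right.2 fun y hy hyT ↦ ?_⟩
  · by_contra hxT
    exact (hT' x hxT).not_gt (hj x hx v hv)
  · exact (hT y hyT).not_gt (hj u hu y hy)

variable {k l : ℕ}

lemma exists_eq_insert_erase (h : IsCrossIntersecting A C) (hA : ∀ i, #(A i) = k)
    (hC : ∀ i, #(C i) = l) (hsep : ∀ f : Numbering α, ∃ i, f ∈ separators (A i) (C i))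
    {i : ι} {a c : α} (ha : a ∈ A i) (hc : c ∈ C i) :
    ∃ j, A j = insert c ((A i).erase a) ∧ C j = insert a ((C i).erase c) := by
  have hcA : c ∉ A i := disjoint_right.1 (h.disjoint i) hc
  have haC : a ∉ C i := disjoint_left.1 (h.disjoint i) ha
  have hca : c ≠ a := fun hca ↦ hcA (hca ▸ ha)
  have hcardA : #(insert c ((A i).erase a)) = k := by
    rw [card_insert_of_notMem (by simp [hcA]), card_erase_add_one ha, hA]
  have hcardC : #(insert a ((C i).erase c)) = l := by
    rw [card_insert_of_notMem (by simp [haC]), card_erase_add_one hc, hC]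
  obtain ⟨j, hj, -⟩ := h.exists_subset_insert_erase hsep ha hc Subset.rfl (h.disjoint i)
  obtain ⟨j', -, hj'⟩ := h.exists_subset_insert_erase hsep ha hc (S := (C i)ᶜ)
    (subset_compl_iff_disjoint_right.2 (h.disjoint i)) disjoint_compl_left
  have hAj : A j = insert c ((A i).erase a) :=
    eq_of_subset_of_card_le hj (by rw [hcardA, hA])
  have hCj' : C j' = insert a ((C i).erase c) := by
    refine eq_of_subset_of_card_le (fun x hx ↦ ?_) (by rw [hcardC, hC])
    have hxT := disjoint_right.1 hj' hx
    simp only [mem_insert, mem_erase, mem_compl] at hxT ⊢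
    tauto
  have hjj' : j = j' := by
    rw [← h, hAj, hCj', disjoint_left]
    have := disjoint_left.1 (h.disjoint i)
    grind
  exact ⟨j, hAj, hjj' ▸ hCj'⟩

end IsCrossIntersecting

omit [Fintype α] in
theorem IsCrossIntersecting.exists_image_eq_powersetCard [Finite α] [Fintype ι] {A C : ι → Finset α}
    {k l : ℕ} (h : IsCrossIntersecting A C) (hA : ∀ i, #(A i) = k) (hC : ∀ i, #(C i) = l)
    (hcard : Fintype.card ι = (k + l).choose k) :
    ∃ U : Finset α, #U = k + l ∧ univ.image A = U.powersetCard k := by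
  cases nonempty_fintype α
  have hsep := h.exists_mem_separators_of_card_eq_choose hA hC hcard
  obtain ⟨i₀⟩ : Nonempty ι :=
    Fintype.card_pos_iff.1 (hcard ▸ Nat.choose_pos (Nat.le_add_right k l))
  let U := A i₀ ∪ C i₀
  have hU : #U = k + l := by
    rw [card_union_of_disjoint (h.disjoint i₀), hA, hC]
  have himage : ({i | A i ∪ C i = U} : Finset ι).image A = U.powersetCard k := by
    refine eq_powersetCard_of_exchange ⟨A i₀, mem_image_of_mem A (by simp [U])⟩ ?_ ?_
    · refine image_subset_iff.2 fun i hi ↦ mem_powersetCard.2 ⟨?_, hA i⟩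
      exact (mem_filter.1 hi).2 ▸ subset_union_left
    · intro X hX a ha c hc
      obtain ⟨i, hi, rfl⟩ := mem_image.1 hX
      have hiU := (mem_filter.1 hi).2
      obtain ⟨hcU, hcA⟩ := mem_sdiff.1 hc
      have hcC : c ∈ C i := (mem_union.1 (hiU ▸ hcU)).resolve_left hcA
      obtain ⟨j, hAj, hCj⟩ := h.exists_eq_insert_erase hA hC hsep ha hcC
      refine mem_image.2 ⟨j, mem_filter.2 ⟨mem_univ j, ?_⟩, hAj⟩
      rw [hAj, hCj, ← hiU]
      grind
  refine ⟨U, hU, (eq_of_subset_of_card_le (himage ▸ image_subset_image (subset_univ _)) ?_).symm⟩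
  rw [card_image_of_injective _ h.injective_left, card_univ, hcard, card_powersetCard, hU]

end SetPairs

section Isolates

variable {α : Type*} {q k : ℕ} {𝒜 : Finset (Finset α)}

/-- `W` is a set whose only subset among the members of `𝒜` is `A`. Complements of isolating sets
are the partners of the members of `𝒜` in a cross-intersecting system. -/
def Isolates (𝒜 : Finset (Finset α)) (W A : Finset α) : Prop :=
  A ⊆ W ∧ ∀ X ∈ 𝒜, X ⊆ W → X = A

lemma isolates_self_of_sized (h𝒜 : (𝒜 : Set (Finset α)).Sized k)
    {A : Finset α} (hA : A ∈ 𝒜) : Isolates 𝒜 A A :=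
  ⟨Subset.rfl, fun _ hX hXA ↦ eq_of_subset_of_card_le hXA (by rw [h𝒜 hX, h𝒜 hA])⟩

variable [Fintype α]

lemma add_card_sub_eq_of_isolates (hne : 𝒜.Nonempty)
    (h : ∀ A ∈ 𝒜, ∃ W, #W = k + q ∧ Isolates 𝒜 W A) :
    k + (Fintype.card α - (k + q)) = Fintype.card α - q := by
  obtain ⟨A, hA⟩ := hne
  obtain ⟨W, hW, -⟩ := h A hA
  have := card_le_univ W
  omega

lemma Isolates.disjoint_compl_iff [DecidableEq α] {W A X : Finset α}
    (h : Isolates 𝒜 W A) (hX : X ∈ 𝒜) : Disjoint X Wᶜ ↔ X = A := by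
  rw [disjoint_compl_right_iff]
  exact ⟨h.2 X hX, by rintro rfl; exact h.1⟩

lemma exists_isCrossIntersecting_of_isolates
    (h : ∀ A ∈ 𝒜, ∃ W, #W = k + q ∧ Isolates 𝒜 W A) :
    ∃ C : 𝒜 → Finset α, IsCrossIntersecting (fun A : 𝒜 ↦ A.1) C ∧
      ∀ A, #(C A) = Fintype.card α - (k + q) := by
  classical
  choose W hWcard hW using h
  refine ⟨fun A ↦ (W A A.2)ᶜ, fun A B ↦ ?_, fun A ↦ by rw [card_compl, hWcard]⟩
  rw [(hW B B.2).disjoint_compl_iff A.2, Subtype.ext_iff]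

theorem card_le_choose_of_isolates (h𝒜 : (𝒜 : Set (Finset α)).Sized k)
    (h : ∀ A ∈ 𝒜, ∃ W, #W = k + q ∧ Isolates 𝒜 W A) :
    #𝒜 ≤ (Fintype.card α - q).choose k := by
  obtain rfl | hne := 𝒜.eq_empty_or_nonempty
  · simp
  obtain ⟨C, hC, hCcard⟩ := exists_isCrossIntersecting_of_isolates h
  rw [← add_card_sub_eq_of_isolates hne h, ← Fintype.card_coe]
  exact hC.card_le_choose (fun A ↦ h𝒜 A.2) hCcard

theorem exists_eq_powersetCard_of_isolates (h𝒜 : (𝒜 : Set (Finset α)).Sized k)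
    (h : ∀ A ∈ 𝒜, ∃ W, #W = k + q ∧ Isolates 𝒜 W A)
    (hcard : #𝒜 = (Fintype.card α - q).choose k) :
    ∃ U : Finset α, #U = Fintype.card α - q ∧ 𝒜 = U.powersetCard k := by
  classical
  obtain rfl | hne := 𝒜.eq_empty_or_nonempty
  · obtain ⟨U, -, hU⟩ := exists_subset_card_eq
      (Nat.sub_le _ q : Fintype.card α - q ≤ #(univ : Finset α))
    refine ⟨U, hU, (powersetCard_eq_empty.2 ?_).symm⟩
    rw [hU]
    exact Nat.choose_eq_zero_iff.1 hcard.symm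
  obtain ⟨C, hC, hCcard⟩ := exists_isCrossIntersecting_of_isolates h
  rw [← add_card_sub_eq_of_isolates hne h, ← Fintype.card_coe] at hcard
  obtain ⟨U, hU, himage⟩ := hC.exists_image_eq_powersetCard (fun A ↦ h𝒜 A.2) hCcard hcard
  refine ⟨U, hU.trans (add_card_sub_eq_of_isolates hne h), ?_⟩
  rw [← himage, univ_eq_attach, attach_image_val]

end Isolates

section UnionEfficient

variable {α : Type*} {q k : ℕ} {F M G : Finset (Finset α)}

/-- A perfect matching in the complete `k`-uniform hypergraph on `α`: a set of `k`-sets that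
partitions `α`. -/
structure IsPerfectMatching (k : ℕ) (M : Finset (Finset α)) : Prop where
  sized : (M : Set (Finset α)).Sized k
  existsUnique_mem : ∀ x, ∃! X, X ∈ M ∧ x ∈ X

namespace IsPerfectMatching

lemma exists_mem (hM : IsPerfectMatching k M) (x : α) : ∃ X ∈ M, x ∈ X :=
  (hM.existsUnique_mem x).exists

lemma eq_of_mem_of_mem (hM : IsPerfectMatching k M) {X Y : Finset α} {x : α} (hX : X ∈ M)
    (hY : Y ∈ M) (hxX : x ∈ X) (hxY : x ∈ Y) : X = Y :=
  (hM.existsUnique_mem x).unique ⟨hX, hxX⟩ ⟨hY, hxY⟩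

lemma disjoint (hM : IsPerfectMatching k M) {X Y : Finset α} (hX : X ∈ M) (hY : Y ∈ M)
    (hXY : X ≠ Y) : Disjoint X Y :=
  disjoint_left.2 fun _ hxX hxY ↦ hXY (hM.eq_of_mem_of_mem hX hY hxX hxY)

lemma sum_card_inter [DecidableEq α] (hM : IsPerfectMatching k M) (W : Finset α) :
    ∑ X ∈ M, #(X ∩ W) = #W := by
  have hdeg : ∀ x ∈ W, #{X ∈ M | x ∈ X} = 1 := fun x _ ↦ by
    obtain ⟨X, hX, huniq⟩ := hM.existsUnique_mem x
    exact card_eq_one.2 ⟨X, by ext Y; simpa using ⟨huniq Y, by rintro rfl; exact hX⟩⟩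
  simpa [inter_comm] using Finset.sum_card_inter hdeg

lemma card_mul [Fintype α] (hM : IsPerfectMatching k M) : #M * k = Fintype.card α := by
  classical
  rw [← card_univ, ← hM.sum_card_inter univ]
  exact (sum_const_nat fun X hX ↦ by rw [inter_univ, hM.sized hX]).symm

lemma card_eq [Fintype α] (hM : IsPerfectMatching k M) (hk : 0 < k)
    (hα : Fintype.card α = q * k) : #M = q :=
  Nat.eq_of_mul_eq_mul_right hk (hM.card_mul.trans hα)

lemma card_le_of_forall_not_disjoint (hM : IsPerfectMatching k M) {T : Finset α}
    (hmeet : ∀ X ∈ M, ¬Disjoint X T) : #M ≤ #T := by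
  classical
  rw [← hM.sum_card_inter T, card_eq_sum_ones]
  exact sum_le_sum fun X hX ↦ card_pos.2 (not_disjoint_iff_nonempty_inter.1 (hmeet X hX))

variable [DecidableEq α]

lemma subset_of_card_sdiff_le_one (hG : IsPerfectMatching k G) (hM : IsPerfectMatching k M)
    (hk : 0 < k) (h : #(G \ M) ≤ 1) : M ⊆ G := by
  intro B hB
  by_contra hBG
  obtain ⟨x, hx⟩ := card_pos.1 (hM.sized hB ▸ hk)
  have hout : ∀ y ∈ B, ∃ X ∈ G \ M, y ∈ X := fun y hy ↦ by
    obtain ⟨X, hX, hyX⟩ := hG.exists_mem y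
    refine ⟨X, mem_sdiff.2 ⟨hX, fun hXM ↦ hBG ?_⟩, hyX⟩
    rwa [hM.eq_of_mem_of_mem hB hXM hy hyX]
  obtain ⟨X, hX, -⟩ := hout x hx
  have hBX : B ⊆ X := fun y hy ↦ by
    obtain ⟨Y, hY, hyY⟩ := hout y hy
    rwa [card_le_one.1 h X hX Y hY]
  have hXG := (mem_sdiff.1 hX).1
  exact hBG (eq_of_subset_of_card_le hBX (by rw [hG.sized hXG, hM.sized hB]) ▸ hXG)

lemma exists_mem_of_sdiff_eq_pair (hG : IsPerfectMatching k G) {P P' A B : Finset α} {x : α}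
    (hGM : G \ M = {P, P'}) (hx : P' \ A ⊆ {x}) (hxB : x ∈ B) (y : α) :
    ∃ X ∈ {A, P} ∪ insert B (G ∩ M), y ∈ X := by
  obtain ⟨X, hX, hyX⟩ := hG.exists_mem y
  by_cases hXM : X ∈ M
  · exact ⟨X, by simp [hX, hXM], hyX⟩
  have hXPP' : X ∈ ({P, P'} : Finset _) := hGM ▸ mem_sdiff.2 ⟨hX, hXM⟩
  obtain rfl | hXP' := mem_insert.1 hXPP'
  · exact ⟨X, by simp, hyX⟩
  obtain rfl := mem_singleton.1 hXP'
  by_cases hyA : y ∈ A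
  · exact ⟨A, by simp, hyA⟩
  obtain rfl := mem_singleton.1 (hx (mem_sdiff.2 ⟨hyX, hyA⟩))
  exact ⟨B, by simp, hxB⟩

lemma card_inter_of_tight (hG : IsPerfectMatching k G) (hk : 3 ≤ k) {W : Finset α}
    (hW : #W < k + #G) (hout : ∀ X ∈ G \ M, k ≤ #(X ∩ W) + 1)
    (hin : ∀ X ∈ G ∩ M, 0 < #(X ∩ W)) (hcard : 1 < #(G \ M)) :
    k = 3 ∧ #(G \ M) = 2 ∧ (∀ X ∈ G \ M, #(X ∩ W) = 2) ∧ ∀ X ∈ G ∩ M, #(X ∩ W) = 1 := by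
  have hsplit : ∑ X ∈ G ∩ M, #(X ∩ W) + ∑ X ∈ G \ M, #(X ∩ W) = #W :=
    (sum_inter_add_sum_sdiff G M _).trans (hG.sum_card_inter W)
  have hsplitG : #(G ∩ M) + #(G \ M) = #G := card_inter_add_card_sdiff G M
  have hout_le : ∀ X ∈ G \ M, k - 1 ≤ #(X ∩ W) := fun X hX ↦ by have := hout X hX; omega
  have hsum_out : #(G \ M) * (k - 1) ≤ ∑ X ∈ G \ M, #(X ∩ W) := card_nsmul_le_sum _ _ _ hout_le
  have hsum_in : #(G ∩ M) * 1 ≤ ∑ X ∈ G ∩ M, #(X ∩ W) :=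
    card_nsmul_le_sum (G ∩ M) (fun X ↦ #(X ∩ W)) 1 hin
  obtain ⟨l, rfl⟩ : ∃ l, k = l + 3 := Nat.exists_eq_add_of_le' hk
  obtain ⟨s, hs⟩ : ∃ s, #(G \ M) = s + 2 := Nat.exists_eq_add_of_le' hcard
  have hbound : (s + 2) * (l + 2) < l + 3 + (s + 2) := by
    simp only [hs, Nat.succ_sub_one] at hsum_out
    omega
  obtain ⟨rfl, rfl⟩ : s = 0 ∧ l = 0 := by
    constructor <;> nlinarith
  have hsum_out_eq : ∑ X ∈ G \ M, #(X ∩ W) = ∑ X ∈ G \ M, 2 := by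
    rw [sum_const, smul_eq_mul]; omega
  have hsum_in_eq : ∑ X ∈ G ∩ M, #(X ∩ W) = ∑ X ∈ G ∩ M, 1 := by
    rw [sum_const, smul_eq_mul]; omega
  exact ⟨rfl, hs, fun X hX ↦ ((sum_eq_sum_iff_of_le hout_le).1 hsum_out_eq.symm X hX).symm,
    fun X hX ↦ ((sum_eq_sum_iff_of_le hin).1 hsum_in_eq.symm X hX).symm⟩

lemma exists_injOn_image_eq (hM : IsPerfectMatching k M) {T : Finset α} (hT : #T = #M)
    (hmeet : ∀ X ∈ M, ¬Disjoint X T) :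
    ∃ B : α → Finset α, (∀ x, B x ∈ M ∧ x ∈ B x) ∧ Set.InjOn B T ∧ T.image B = M := by
  choose B hBM hxB using hM.exists_mem
  have himage : T.image B = M := by
    refine (image_subset_iff.2 fun x _ ↦ hBM x).antisymm fun X hX ↦ ?_
    obtain ⟨x, hxX, hxT⟩ := not_disjoint_iff.1 (hmeet X hX)
    exact mem_image.2 ⟨x, hxT, hM.eq_of_mem_of_mem (hBM x) hX (hxB x) hxX⟩
  exact ⟨B, fun x ↦ ⟨hBM x, hxB x⟩, card_image_iff.1 (by rw [himage, hT]), himage⟩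

end IsPerfectMatching

variable [Fintype α]

lemma isPerfectMatching_of_card_mul (hG : (G : Set (Finset α)).Sized k)
    (hcover : ∀ x, ∃ X ∈ G, x ∈ X) (hα : Fintype.card α = #G * k) : IsPerfectMatching k G := by
  classical
  have hdeg_pos : ∀ x ∈ univ, 1 ≤ #{X ∈ G | x ∈ X} := fun x _ ↦ by
    obtain ⟨X, hX, hx⟩ := hcover x
    exact card_pos.2 ⟨X, mem_filter.2 ⟨hX, hx⟩⟩
  have hdeg_sum : ∑ _x : α, 1 = ∑ x, #{X ∈ G | x ∈ X} := calc
    ∑ _x : α, 1 = ∑ X ∈ G, #X := by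
      rw [sum_const_nat fun X hX ↦ hG hX, ← hα, ← card_univ, card_eq_sum_ones]
    _ = ∑ X ∈ G, #{x | x ∈ X} := by simp only [filter_univ_mem]
    _ = ∑ x, #{X ∈ G | x ∈ X} := (sum_card_bipartiteAbove_eq_sum_card_bipartiteBelow (· ∈ ·)).symm
  refine ⟨hG, fun x ↦ ?_⟩
  have hdeg := (sum_eq_sum_iff_of_le hdeg_pos).1 hdeg_sum x (mem_univ x)
  obtain ⟨X, hX⟩ := card_eq_one.1 hdeg.symm
  have huniq (Y : Finset α) : Y ∈ G ∧ x ∈ Y ↔ Y = X := by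
    rw [← mem_singleton, ← hX, mem_filter]
  exact ⟨X, (huniq X).2 rfl, fun Y ↦ (huniq Y).1⟩

variable [DecidableEq α]

lemma sup_id_eq_univ_iff : G.sup id = univ ↔ ∀ x, ∃ X ∈ G, x ∈ X := by
  simp only [eq_univ_iff_forall, mem_sup, id_eq]

/-- `F` is union-`q`-efficient: every subfamily of `F` that covers `α` contains `q` sets that
already cover `α`. -/
def IsUnionEfficient (q : ℕ) (F : Finset (Finset α)) : Prop :=
  ∀ F' ⊆ F, F'.sup id = univ → ∃ G ⊆ F', #G = q ∧ G.sup id = univ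

namespace IsUnionEfficient

lemma exists_isPerfectMatching (h : IsUnionEfficient q F) (hF : (F : Set (Finset α)).Sized k)
    (hα : Fintype.card α = q * k) {F' : Finset (Finset α)} (hF' : F' ⊆ F)
    (hcover : ∀ x, ∃ X ∈ F', x ∈ X) : ∃ G ⊆ F', IsPerfectMatching k G := by
  obtain ⟨G, hGF', rfl, hGcover⟩ := h F' hF' (sup_id_eq_univ_iff.2 hcover)
  exact ⟨G, hGF', isPerfectMatching_of_card_mul (fun X hX ↦ hF (hF' (hGF' hX)))
    (sup_id_eq_univ_iff.1 hGcover) hα⟩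

lemma exists_isPerfectMatching_one_lt_card_sdiff (h : IsUnionEfficient q F)
    (hF : (F : Set (Finset α)).Sized k) (hα : Fintype.card α = q * k) (hk : 0 < k)
    (hM : IsPerfectMatching k M) {F' : Finset (Finset α)} (hF' : F' ⊆ F)
    (hcover : ∀ x, ∃ X ∈ F', x ∈ X) (hMF' : ¬M ⊆ F') :
    ∃ G ⊆ F', IsPerfectMatching k G ∧ 1 < #(G \ M) := by
  obtain ⟨G, hGF', hG⟩ := h.exists_isPerfectMatching hF hα hF' hcover
  exact ⟨G, hGF', hG, not_le.1 fun hle ↦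
    hMF' ((hG.subset_of_card_sdiff_le_one hM hk hle).trans hGF')⟩

lemma disjoint_of_sdiff_eq_pair (h : IsUnionEfficient q F) (hF : (F : Set (Finset α)).Sized k)
    (hα : Fintype.card α = q * k) (hk : 0 < k) (hM : IsPerfectMatching k M) (hMF : M ⊆ F)
    (hG : IsPerfectMatching k G) (hGF : G ⊆ F) {P P' A : Finset α} (hPP' : P ≠ P')
    (hGM : G \ M = {P, P'}) (hA : A ∈ F \ M) (hcard : #(P' \ A) ≤ 1) : Disjoint A P := by
  obtain ⟨hAF, hAM⟩ := mem_sdiff.1 hA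
  obtain ⟨hPG, hPM⟩ : P ∈ G ∧ P ∉ M := mem_sdiff.1 (hGM ▸ mem_insert_self P {P'})
  have : Nonempty α := (card_pos.1 (hF hAF ▸ hk)).to_type
  obtain ⟨x, hx⟩ := card_le_one_iff_subset_singleton.1 hcard
  obtain ⟨B, hB, hxB⟩ := hM.exists_mem x
  have hnot : ¬M ⊆ {A, P} ∪ insert B (G ∩ M) := fun hsub ↦ by
    have hle : #M ≤ #(G ∩ M) + 1 :=
      (card_le_card fun X hX ↦ by grind : #M ≤ #(insert B (G ∩ M))).trans (card_insert_le _ _)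
    have hsplit : #(G ∩ M) + #(G \ M) = #G := card_inter_add_card_sdiff G M
    rw [hGM, card_pair hPP', hG.card_eq hk hα] at hsplit
    rw [hM.card_eq hk hα] at hle
    omega
  obtain ⟨G₂, hG₂, hG₂M, hlt⟩ := h.exists_isPerfectMatching_one_lt_card_sdiff hF hα hk hM
    (by grind) (hG.exists_mem_of_sdiff_eq_pair hGM hx hxB) hnot
  have hsub : G₂ \ M ⊆ {A, P} := fun X hX ↦ by grind
  have hpair : G₂ \ M = {A, P} := eq_of_subset_of_card_le hsub (card_le_two.trans hlt)
  have hAP : A ≠ P := by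
    rintro rfl
    simp [hpair] at hlt
  exact hG₂M.disjoint (by grind) (by grind) hAP

lemma exists_isPerfectMatching_of_not_isolates_insert (h : IsUnionEfficient q F)
    (hF : (F : Set (Finset α)).Sized k) (hα : Fintype.card α = q * k) (hk : 0 < k)
    (hM : IsPerfectMatching k M) (hMF : M ⊆ F) {A W : Finset α} (hA : A ∈ F \ M)
    (hW : Isolates (F \ M) W A) (hWcard : #W < k + q)
    (hmax : ∀ y ∉ W, ¬Isolates (F \ M) (insert y W) A) :
    ∃ G ⊆ F, IsPerfectMatching k G ∧ 1 < #(G \ M) ∧ (∀ X ∈ G \ M, k ≤ #(X ∩ W) + 1) ∧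
      ∀ X ∈ G ∩ M, ¬Disjoint X (W \ A) := by
  obtain ⟨hAW, hWuniq⟩ := hW
  let F' := {X ∈ F \ M | k ≤ #(X ∩ W) + 1} ∪ {X ∈ M | ¬Disjoint X (W \ A)}
  have hAk : #A = k := hF (mem_sdiff.1 hA).1
  have hcover : ∀ x, ∃ X ∈ F', x ∈ X := fun x ↦ by
    by_cases hxA : x ∈ A
    · exact ⟨A, mem_union_left _ (mem_filter.2 ⟨hA, by simp [inter_eq_left.2 hAW, hAk]⟩), hxA⟩
    by_cases hxW : x ∈ W
    · obtain ⟨X, hX, hxX⟩ := hM.exists_mem x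
      have hmeet : ¬Disjoint X (W \ A) := not_disjoint_iff.2 ⟨x, hxX, mem_sdiff.2 ⟨hxW, hxA⟩⟩
      exact ⟨X, mem_union_right _ (mem_filter.2 ⟨hX, hmeet⟩), hxX⟩
    obtain ⟨X, hX, hXsub, hXA⟩ : ∃ X ∈ F \ M, X ⊆ insert x W ∧ X ≠ A := by
      by_contra! hall
      exact hmax x hxW ⟨hAW.trans (subset_insert x W), hall⟩
    have hxX : x ∈ X := by
      by_contra hxX
      exact hXA (hWuniq X hX ((subset_insert_iff_of_notMem hxX).1 hXsub))
    have hXk : k ≤ #(X ∩ W) + 1 := by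
      rw [← hF (mem_sdiff.1 hX).1, ← card_inter_add_card_sdiff X W, ← card_singleton x]
      gcongr
      exact sdiff_le_iff'.2 hXsub
    exact ⟨X, mem_union_left _ (mem_filter.2 ⟨hX, hXk⟩), hxX⟩
  have hnot : ¬M ⊆ F' := fun hsub ↦ by
    have hle := hM.card_le_of_forall_not_disjoint (T := W \ A) fun X hX ↦ by
      have := hsub hX
      grind
    rw [hM.card_eq hk hα, card_sdiff_of_subset hAW, hAk] at hle
    have := card_le_card hAW
    omega
  obtain ⟨G, hGF', hG, hlt⟩ := h.exists_isPerfectMatching_one_lt_card_sdiff hF hα hk hM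
    (by grind) hcover hnot
  exact ⟨G, by grind, hG, hlt, by grind, by grind⟩

lemma card_inter_add_card_inter_le_two (h : IsUnionEfficient q F)
    (hF : (F : Set (Finset α)).Sized 3) (hα : Fintype.card α = q * 3) (hM : IsPerfectMatching 3 M)
    (hMF : M ⊆ F) (hG : IsPerfectMatching 3 G) (hGF : G ⊆ F) {P P' A : Finset α} (hPP' : P ≠ P')
    (hGM : G \ M = {P, P'}) (hA : A ∈ F \ M) (hP : #(P ∩ A) ≤ 2) (hP' : #(P' ∩ A) ≤ 2) :
    #(P ∩ A) + #(P' ∩ A) ≤ 2 := by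
  have hzero {X Y : Finset α} (hXY : X ≠ Y) (hXYG : G \ M = {X, Y}) (hY : 2 ≤ #(Y ∩ A)) :
      #(X ∩ A) = 0 := by
    have hY3 : #Y = 3 := hG.sized (mem_sdiff.1 (hXYG ▸ by simp : Y ∈ G \ M)).1
    have hYA : #(Y \ A) ≤ 1 := by
      have := card_inter_add_card_sdiff Y A
      omega
    rw [card_eq_zero, ← disjoint_iff_inter_eq_empty, disjoint_comm]
    exact h.disjoint_of_sdiff_eq_pair hF hα three_pos hM hMF hG hGF hXY hXYG hA hYA
  have := hzero hPP' hGM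
  have := hzero hPP'.symm (hGM.trans (pair_comm P P'))
  omega

lemma exists_isolates_insert (h : IsUnionEfficient q F) (hF : (F : Set (Finset α)).Sized k)
    (hα : Fintype.card α = q * k) (hk : 3 ≤ k) (hM : IsPerfectMatching k M) (hMF : M ⊆ F)
    {A W : Finset α} (hA : A ∈ F \ M) (hW : Isolates (F \ M) W A) (hWcard : #W < k + q) :
    ∃ y ∉ W, Isolates (F \ M) (insert y W) A := by
  by_contra! hmax
  have hk₀ : 0 < k := by omega
  obtain ⟨G, hGF, hG, hlt, hout, hin⟩ :=
    h.exists_isPerfectMatching_of_not_isolates_insert hF hα hk₀ hM hMF hA hW hWcard hmax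
  obtain ⟨rfl, hGM, hout, hin_eq⟩ := hG.card_inter_of_tight hk (by rwa [hG.card_eq hk₀ hα]) hout
    (fun X hX ↦ card_pos.2 (not_disjoint_iff_nonempty_inter.1 fun hd ↦
      hin X hX (hd.mono_right sdiff_subset))) hlt
  obtain ⟨P, P', hPP', hpair⟩ := card_eq_two.1 hGM
  have hdisjoint : ∀ X ∈ G ∩ M, #(X ∩ A) = 0 := fun X hX ↦ by
    obtain ⟨z, hzX, hzW⟩ := not_disjoint_iff.1 (hin X hX)
    obtain ⟨hzW, hzA⟩ := mem_sdiff.1 hzW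
    have hssub : X ∩ A ⊂ X ∩ W := (ssubset_iff_of_subset (inter_subset_inter_left hW.1)).2
      ⟨z, mem_inter.2 ⟨hzX, hzW⟩, fun hz ↦ hzA (mem_inter.1 hz).2⟩
    have := card_lt_card hssub
    rw [hin_eq X hX] at this
    omega
  have hsum : #(P ∩ A) + #(P' ∩ A) = 3 := by
    rw [← sum_pair hPP' (f := fun X ↦ #(X ∩ A)), ← hpair, ← hF (mem_sdiff.1 hA).1,
      ← hG.sum_card_inter A, ← sum_inter_add_sum_sdiff G M, sum_eq_zero hdisjoint, zero_add]
  have hle {X : Finset α} (hX : X ∈ G \ M) : #(X ∩ A) ≤ 2 :=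
    (card_le_card (inter_subset_inter_left hW.1)).trans_eq (hout X hX)
  have := h.card_inter_add_card_inter_le_two hF hα hM hMF hG hGF hPP' hpair hA
    (hle (hpair ▸ by simp)) (hle (hpair ▸ by simp))
  omega

lemma exists_isolates (h : IsUnionEfficient q F) (hF : (F : Set (Finset α)).Sized k)
    (hα : Fintype.card α = q * k) (hk : 3 ≤ k) (hM : IsPerfectMatching k M) (hMF : M ⊆ F)
    {A : Finset α} (hA : A ∈ F \ M) {j : ℕ} (hj : j ≤ q) :
    ∃ W, #W = k + j ∧ Isolates (F \ M) W A := by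
  have hFM : ((F \ M : Finset _) : Set (Finset α)).Sized k :=
    hF.mono (coe_subset.2 sdiff_subset)
  induction j with
  | zero => exact ⟨A, hFM hA, isolates_self_of_sized hFM hA⟩
  | succ j ih =>
    obtain ⟨W, hWcard, hW⟩ := ih (by omega)
    obtain ⟨y, hyW, hy⟩ := h.exists_isolates_insert hF hα hk hM hMF hA hW (by omega)
    exact ⟨insert y W, by rw [card_insert_of_notMem hyW, hWcard, add_assoc], hy⟩

end IsUnionEfficient

theorem stmt6_general (hk : 3 ≤ k) (hα : Fintype.card α = q * k)
    (hF : (F : Set (Finset α)).Sized k) (hcover : F.sup id = univ) (heff : IsUnionEfficient q F) :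
    #F ≤ (Fintype.card α - q).choose k + q ∧
    (#F = (Fintype.card α - q).choose k + q →
      ∃ (T : Finset α) (B : α → Finset α),
        #T = q ∧
        (∀ x ∈ T, B x ∈ F ∧ x ∈ B x ∧ #(B x) = k) ∧
        (∀ x ∈ T, ∀ y ∈ T, x ≠ y → Disjoint (B x) (B y)) ∧
        F = T.image B ∪ powersetCard k Tᶜ) := by
  obtain ⟨M, hMF, hM⟩ :=
    heff.exists_isPerfectMatching hF hα Subset.rfl (sup_id_eq_univ_iff.1 hcover)
  have hMq : #M = q := hM.card_eq (by omega) hα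
  have hFM : ((F \ M : Finset _) : Set (Finset α)).Sized k :=
    hF.mono (coe_subset.2 sdiff_subset)
  have hiso : ∀ A ∈ F \ M, ∃ W, #W = k + q ∧ Isolates (F \ M) W A :=
    fun A hA ↦ heff.exists_isolates hF hα hk hM hMF hA le_rfl
  have hcard : #(F \ M) + q = #F := hMq ▸ card_sdiff_add_card_eq_card hMF
  refine ⟨by have := card_le_choose_of_isolates hFM hiso; omega, fun heq ↦ ?_⟩
  obtain ⟨U, hU, hFMU⟩ := exists_eq_powersetCard_of_isolates hFM hiso (by omega)
  have hUq : #Uᶜ = q := by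
    rw [card_compl, hU, Nat.sub_sub_self (hα ▸ Nat.le_mul_of_pos_right q (by omega))]
  have hmeet : ∀ X ∈ M, ¬Disjoint X Uᶜ := fun X hX hXU ↦ by
    have hXFM : X ∈ F \ M := by
      rw [hFMU, mem_powersetCard]
      exact ⟨disjoint_compl_right_iff.1 hXU, hM.sized hX⟩
    exact (mem_sdiff.1 hXFM).2 hX
  obtain ⟨B, hB, hinj, himage⟩ := hM.exists_injOn_image_eq (hUq.trans hMq.symm) hmeet
  refine ⟨Uᶜ, B, hUq, fun x _ ↦ ⟨hMF (hB x).1, (hB x).2, hM.sized (hB x).1⟩,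
    fun x hx y hy hxy ↦ hM.disjoint (hB x).1 (hB y).1 (hinj.ne hx hy hxy), ?_⟩
  rw [himage, compl_compl, ← hFMU, union_sdiff_of_subset hMF]

end UnionEfficient

/-- Let `n = qk`, `k ≥ 3`, `q ≥ 1`, and let `F ⊆ C([n],k)` be non-trivial and
union-`q`-efficient. Then `|F| ≤ C(n-q,k) + q`, with equality only for the family
consisting of `q` pairwise disjoint `k`-sets, each containing one of `q`
designated elements, together with all `k`-subsets of the remaining `n-q`
elements. -/
theorem stmt6 (q k n : ℕ) (hk : 3 ≤ k) (hq : 1 ≤ q) (hn : n = q * k)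
    (F : Finset (Finset (Fin n))) (hF : ∀ A ∈ F, A.card = k)
    (hnontriv : F.sup id = Finset.univ)
    (heff : ∀ F' ⊆ F, F'.sup id = Finset.univ →
      ∃ G ⊆ F', G.card = q ∧ G.sup id = Finset.univ) :
    F.card ≤ (n - q).choose k + q ∧
    (F.card = (n - q).choose k + q →
      ∃ (T : Finset (Fin n)) (B : Fin n → Finset (Fin n)),
        T.card = q ∧
        (∀ x ∈ T, B x ∈ F ∧ x ∈ B x ∧ (B x).card = k) ∧
        (∀ x ∈ T, ∀ y ∈ T, x ≠ y → Disjoint (B x) (B y)) ∧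
        F = T.image B ∪ Finset.powersetCard k Tᶜ) := by
  simpa only [Fintype.card_fin] using
    stmt6_general hk ((Fintype.card_fin n).trans hn) (fun A hA ↦ hF A hA) hnontriv heff
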